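/- arXiv:1801.08778 — 2 statements merged into one kernel-verified Lean document; each statement's English description precedes it below -/
import Mathlib

section
/- For every k ≥ 0 the complexity function satisfies the upper bound C(|p_k| + 1) ≤ (#A_k − 1)·(|p_k| + 1) + 𝟙_{A_{k+1}}(a_k)·(|p_{k−1}| + 1). -/
/-!
Put `p = p_k` and `q = |p_k| + 1`. Every later block is a concatenation `p x₁ p x₂ ⋯ x_m p` whose
separators `xᵢ` lie in `A_{k+1}` (`exists_block_eq_sepJoin`). A window of length `q` in such a word
meets exactly one separator `x`, and is therefore a cyclic rotation of `p x` by some `i < q`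
(`exists_rotate_of_infix_sepJoin`). Hence the words of length `q` in the language are indexed by
pairs `(x, i)` with `x ∈ A_{k+1}` and `i < q`.

The separators `x ≠ a_k` contribute at most `(#A_k - 1) q` words, since
`A_k = {a_k} ∪ A_{k+1}`. If `a_k ∈ A_{k+1}`, the separator `a_k` contributes only `|p_{k-1}| + 1`
words: `p_k a_k` is the `n_k`-th power of a word of length `|p_{k-1}| + 1`
(`exists_block_append_eq_flatten`), so its rotations repeat with that period.
-/

open Filter

/-- The blocks `p k` of the simple Toeplitz subshift coded by `a` and `n`:
`p 0 = a 0 ^ (n 0 - 1)` and `p (k+1)` consists of `n (k+1)` copies of `p k`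
separated by `n (k+1) - 1` single letters `a (k+1)`. -/
def ToeplitzBlock {A : Type*} (a : ℕ → A) (n : ℕ → ℕ) : ℕ → List A
  | 0 => List.replicate (n 0 - 1) (a 0)
  | k + 1 => List.intercalate [a (k + 1)] (List.replicate (n (k + 1)) (ToeplitzBlock a n k))

/-- `lenPrev a n k = |p (k-1)|`, with the convention `|p (-1)| = 0`. -/
def lenPrev {A : Type*} (a : ℕ → A) (n : ℕ → ℕ) : ℕ → ℕ
  | 0 => 0
  | k + 1 => (ToeplitzBlock a n k).length

/-- The language of the simple Toeplitz subshift: all finite words occurring as a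
factor of some block `p k`. -/
def ToeplitzLang {A : Type*} (a : ℕ → A) (n : ℕ → ℕ) : Set (List A) :=
  {u | ∃ k, u <:+: ToeplitzBlock a n k}

/-- The complexity function `C L`. -/
noncomputable def cmpl {A : Type*} (a : ℕ → A) (n : ℕ → ℕ) (L : ℕ) : ℕ :=
  Set.ncard {u | u ∈ ToeplitzLang a n ∧ u.length = L}

/-- The palindrome complexity function `P L`. -/
noncomputable def palCmpl {A : Type*} (a : ℕ → A) (n : ℕ → ℕ) (L : ℕ) : ℕ :=
  Set.ncard {u | u ∈ ToeplitzLang a n ∧ u.length = L ∧ u.reverse = u}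

/-- `Ak a k = {a j : j ≥ k}`. -/
def Ak {A : Type*} (a : ℕ → A) (k : ℕ) : Set A := {x | ∃ j, k ≤ j ∧ a j = x}

/-- The eventual alphabet `A_ev = ⋂ k, A_k`. -/
def Aev {A : Type*} (a : ℕ → A) : Set A := ⋂ k, Ak a k

/-- `Kf a k = min {j > k : {a (k+1), …, a j} = A (k+1)}`. -/
noncomputable def Kf {A : Type*} (a : ℕ → A) (k : ℕ) : ℕ :=
  sInf {j | k < j ∧ {x | ∃ i, k + 1 ≤ i ∧ i ≤ j ∧ a i = x} = Ak a (k + 1)}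

/-- The positions `m i` at which `Kf` increases: `m 0 = 0` and
`m (i+1) = min {j > m i : Kf j > Kf (m i)}`. -/
noncomputable def mseq {A : Type*} (a : ℕ → A) : ℕ → ℕ
  | 0 => 0
  | i + 1 => sInf {j | mseq a i < j ∧ Kf a (mseq a i) < Kf a j}

/-- The repetitivity function `R L`: the least `L'` such that every word of
length `L` of the language is a factor of every word of length `L'`. -/
noncomputable def repet {A : Type*} (a : ℕ → A) (n : ℕ → ℕ) (L : ℕ) : ℕ :=
  sInf {L' | ∀ u ∈ ToeplitzLang a n, u.length = L →
    ∀ w ∈ ToeplitzLang a n, w.length = L' → u <:+: w}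

/-- The word `p x₁ p x₂ ⋯ x_m p`: copies of `p` separated by the letters of `xs = [x₁, …, x_m]`. -/
def sepJoin {A : Type*} (p : List A) : List A → List A
  | [] => p
  | x :: xs => p ++ x :: sepJoin p xs

theorem sepJoin_append_cons {A : Type*} (p xs ys : List A) (y : A) :
    sepJoin p xs ++ y :: sepJoin p ys = sepJoin p (xs ++ y :: ys) := by
  induction xs with
  | nil => simp [sepJoin]
  | cons x xs ih => simp [sepJoin, ← ih]

theorem intercalate_replicate_succ {A : Type*} (c : A) (p : List A) (N : ℕ) :
    List.intercalate [c] (List.replicate (N + 1) p) = sepJoin p (List.replicate N c) := by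
  induction N with
  | zero => simp [sepJoin, List.intercalate]
  | succ N ih =>
    rw [List.replicate_succ (n := N) (a := c), sepJoin, ← ih]
    simp [List.replicate_succ, List.intercalate]

theorem exists_sepJoin_sepJoin_replicate {A : Type*} (p xs : List A) (c : A) (N : ℕ) :
    ∃ ys, sepJoin (sepJoin p xs) (List.replicate N c) = sepJoin p ys ∧
      ∀ y ∈ ys, y ∈ xs ∨ y = c := by
  induction N with
  | zero => exact ⟨xs, by simp [sepJoin], fun y hy => Or.inl hy⟩
  | succ N ih =>
    obtain ⟨ys, h, hys⟩ := ih
    refine ⟨xs ++ c :: ys, ?_, ?_⟩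
    · rw [List.replicate_succ, sepJoin, h, sepJoin_append_cons]
    · intro y hy
      simp only [List.mem_append, List.mem_cons] at hy
      rcases hy with hy | hy | hy
      · exact Or.inl hy
      · exact Or.inr hy
      · exact hys y hy

theorem block_succ {A : Type*} (a : ℕ → A) (n : ℕ → ℕ) (hn : ∀ k, 2 ≤ n k) (k : ℕ) :
    ToeplitzBlock a n (k + 1) =
      sepJoin (ToeplitzBlock a n k) (List.replicate (n (k + 1) - 1) (a (k + 1))) := by
  rw [← intercalate_replicate_succ, Nat.sub_add_cancel (by have := hn (k + 1); omega),
    ToeplitzBlock]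

theorem exists_block_eq_sepJoin {A : Type*} (a : ℕ → A) (n : ℕ → ℕ) (hn : ∀ k, 2 ≤ n k)
    (k m : ℕ) : ∃ xs, ToeplitzBlock a n (k + m) = sepJoin (ToeplitzBlock a n k) xs ∧
      ∀ x ∈ xs, x ∈ Ak a (k + 1) := by
  induction m with
  | zero => exact ⟨[], by simp [sepJoin], by simp⟩
  | succ m ih =>
    obtain ⟨xs, h, hxs⟩ := ih
    obtain ⟨ys, h', hys⟩ := exists_sepJoin_sepJoin_replicate (ToeplitzBlock a n k) xs
      (a (k + m + 1)) (n (k + m + 1) - 1)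
    refine ⟨ys, ?_, fun y hy => ?_⟩
    · rw [← add_assoc, block_succ a n hn, h, h']
    · rcases hys y hy with h | rfl
      · exact hxs y h
      · exact ⟨k + m + 1, by omega, rfl⟩

theorem prefix_sepJoin {A : Type*} (p xs : List A) : p <+: sepJoin p xs := by
  cases xs <;> simp [sepJoin]

/-- The windows of length `|p| + 1` in a word `p x₁ p ⋯ x_m p` are rotations of the words
`p xᵢ`. -/
theorem exists_rotate_of_infix_sepJoin {A : Type*} (p xs u : List A) (hu : u <:+: sepJoin p xs)
    (hl : u.length = p.length + 1) :
    ∃ x ∈ xs, ∃ i < p.length + 1, u = (p ++ [x]).rotate i := by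
  induction xs with
  | nil => have := hu.length_le; simp only [sepJoin] at this; omega
  | cons x xs ih =>
    obtain ⟨s, t, h⟩ := hu
    simp only [sepJoin] at h
    rcases Nat.lt_or_ge p.length s.length with hs | hs
    · -- the window starts after the first separator
      have hp : p ++ [x] <+: s := by
        refine List.prefix_of_prefix_length_le (l₃ := p ++ x :: sepJoin p xs) ?_ ?_ ?_
        · exact ⟨sepJoin p xs, by simp⟩
        · exact ⟨u ++ t, by rw [← h]; simp⟩
        · simpa using hs
      obtain ⟨s', rfl⟩ := hp
      have h' : s' ++ u ++ t = sepJoin p xs := by simpa using h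
      obtain ⟨y, hy, i, hi, e⟩ := ih ⟨s', t, h'⟩
      exact ⟨y, List.mem_cons_of_mem _ hy, i, hi, e⟩
    · -- the window contains the first separator `x`
      refine ⟨x, List.mem_cons_self, s.length, by omega, ?_⟩
      obtain ⟨v, hv⟩ := prefix_sepJoin p xs
      have e : u = ((p ++ x :: (p ++ v)).drop s.length).take (p.length + 1) := by
        rw [hv, ← h, ← hl]; simp
      rw [e, List.rotate_eq_drop_append_take (by simp; omega), List.drop_append_of_le_length hs,
        List.drop_append_of_le_length hs, List.take_append_of_le_length hs,
        List.take_append, List.take_of_length_le (by simp; omega)]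
      have e2 : p.length + 1 - (p.drop s.length).length = s.length + 1 := by simp; omega
      rw [e2, List.take_succ_cons, List.take_append_of_le_length hs]
      simp

theorem sepJoin_replicate_append {A : Type*} (p : List A) (c : A) (N : ℕ) :
    sepJoin p (List.replicate N c) ++ [c] = (List.replicate (N + 1) (p ++ [c])).flatten := by
  induction N with
  | zero => simp [sepJoin]
  | succ N ih =>
    rw [List.replicate_succ, sepJoin, List.replicate_succ, List.flatten_cons, ← ih]
    simp

/-- The word `p_k a_k` is a power of a word of length `|p_{k-1}| + 1`. -/
theorem exists_block_append_eq_flatten {A : Type*} (a : ℕ → A) (n : ℕ → ℕ)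
    (hn : ∀ k, 2 ≤ n k) (k : ℕ) :
    ∃ r N, r.length = lenPrev a n k + 1 ∧
      ToeplitzBlock a n k ++ [a k] = (List.replicate (N + 1) r).flatten := by
  cases k with
  | zero =>
    refine ⟨[a 0], n 0 - 1, by simp [lenPrev], ?_⟩
    simp [ToeplitzBlock, List.replicate_succ']
  | succ k =>
    refine ⟨ToeplitzBlock a n k ++ [a (k + 1)], n (k + 1) - 1, by simp [lenPrev], ?_⟩
    rw [block_succ a n hn, sepJoin_replicate_append]

theorem rotate_flatten_replicate {A : Type*} (r : List A) (N i : ℕ) :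
    (List.replicate (N + 1) r).flatten.rotate i =
      (List.replicate (N + 1) r).flatten.rotate (i % r.length) := by
  have h1 : (List.replicate (N + 1) r).flatten.rotate r.length =
      (List.replicate (N + 1) r).flatten := by
    conv_lhs => rw [List.replicate_succ, List.flatten_cons, List.rotate_append_length_eq]
    rw [List.replicate_succ']; simp
  have h2 : ∀ m, (List.replicate (N + 1) r).flatten.rotate (r.length * m) =
      (List.replicate (N + 1) r).flatten := by
    intro m
    induction m with
    | zero => simp
    | succ m ih => rw [Nat.mul_succ, ← List.rotate_rotate, ih, h1]
  conv_lhs => rw [← Nat.div_add_mod i r.length, ← List.rotate_rotate, h2]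

theorem exists_rotate_of_mem_lang {A : Type*} (a : ℕ → A) (n : ℕ → ℕ) (hn : ∀ k, 2 ≤ n k)
    (k : ℕ) (u : List A) (hu : u ∈ ToeplitzLang a n)
    (hl : u.length = (ToeplitzBlock a n k).length + 1) :
    ∃ x ∈ Ak a (k + 1), ∃ i < (ToeplitzBlock a n k).length + 1,
      u = (ToeplitzBlock a n k ++ [x]).rotate i := by
  obtain ⟨m, hm⟩ := hu
  obtain ⟨zs, hz, -⟩ := exists_block_eq_sepJoin a n hn m k
  obtain ⟨xs, h, hxs⟩ := exists_block_eq_sepJoin a n hn k m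
  have hu' : u <:+: sepJoin (ToeplitzBlock a n k) xs := by
    rw [← h, add_comm, hz]
    exact hm.trans (prefix_sepJoin _ _).isInfix
  obtain ⟨x, hx, i, hi, e⟩ := exists_rotate_of_infix_sepJoin _ _ _ hu' hl
  exact ⟨x, hxs x hx, i, hi, e⟩

theorem Ak_eq_insert {A : Type*} (a : ℕ → A) (k : ℕ) : Ak a k = insert (a k) (Ak a (k + 1)) := by
  ext x
  simp only [Ak, Set.mem_insert_iff, Set.mem_ofPred_eq]
  constructor
  · rintro ⟨j, hj, rfl⟩
    rcases hj.eq_or_lt with rfl | h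
    · exact Or.inl rfl
    · exact Or.inr ⟨j, h, rfl⟩
  · rintro (rfl | ⟨j, hj, rfl⟩)
    · exact ⟨k, le_rfl, rfl⟩
    · exact ⟨j, by omega, rfl⟩

/- STATEMENT 2: upper bound for the complexity at word length `|p k| + 1`. -/
open Classical in
theorem stmt2 {A : Type*} [Fintype A] [Nonempty A]
    (a : ℕ → A) (n : ℕ → ℕ) (hn : ∀ k, 2 ≤ n k) (ha : ∀ k, a k ≠ a (k + 1))
    (hAev : 2 ≤ (Aev a).ncard) (k : ℕ) :
    (cmpl a n ((ToeplitzBlock a n k).length + 1) : ℤ) ≤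
      (((Ak a k).ncard : ℤ) - 1) * (((ToeplitzBlock a n k).length : ℤ) + 1) +
        (if a k ∈ Ak a (k + 1) then 1 else 0) * ((lenPrev a n k : ℤ) + 1) := by
  set p := ToeplitzBlock a n k with hp
  set d := lenPrev a n k + 1 with hd
  -- words whose separator differs from `a k`, and words whose separator is `a k`
  let S : Set (List A) := (fun z : A × ℕ => (p ++ [z.1]).rotate z.2) ''
    ((Ak a k \ {a k}) ×ˢ Set.Iio (p.length + 1))
  let T : Set (List A) :=
    if a k ∈ Ak a (k + 1) then (fun i => (p ++ [a k]).rotate i) '' Set.Iio d else ∅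
  have hTfin : T.Finite := by
    simp only [T]
    split_ifs
    · exact (Set.finite_Iio d).image _
    · exact Set.finite_empty
  have hPfin : ((Ak a k \ {a k}) ×ˢ Set.Iio (p.length + 1)).Finite :=
    (Set.toFinite _).prod (Set.finite_Iio _)
  have hsub : {u | u ∈ ToeplitzLang a n ∧ u.length = p.length + 1} ⊆ S ∪ T := by
    rintro u ⟨hu, hl⟩
    obtain ⟨x, hx, i, hi, e⟩ := exists_rotate_of_mem_lang a n hn k u hu hl
    by_cases hxa : x = a k
    · right
      subst hxa
      obtain ⟨r, N, hr, hrN⟩ := exists_block_append_eq_flatten a n hn k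
      simp only [T, if_pos hx]
      refine ⟨i % d, Nat.mod_lt _ (by omega), ?_⟩
      rw [e]
      simp only [hp, hrN]
      rw [hd, ← hr]
      exact (rotate_flatten_replicate r N i).symm
    · left
      refine ⟨(x, i), ⟨⟨?_, hxa⟩, hi⟩, e.symm⟩
      rw [Ak_eq_insert]
      exact Set.mem_insert_of_mem _ hx
  have hS : S.ncard ≤ ((Ak a k).ncard - 1) * (p.length + 1) := by
    refine (Set.ncard_image_le hPfin).trans ?_
    rw [Set.ncard_prod, Set.ncard_sdiff_singleton_of_mem (show a k ∈ Ak a k from ⟨k, le_rfl, rfl⟩)]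
    simp
  have hT : T.ncard ≤ (if a k ∈ Ak a (k + 1) then 1 else 0) * d := by
    simp only [T]
    split_ifs
    · refine (Set.ncard_image_le (Set.finite_Iio d)).trans ?_
      simp
    · simp
  have hpos : 1 ≤ (Ak a k).ncard :=
    (Set.ncard_pos (Set.toFinite _)).2 ⟨a k, k, le_rfl, rfl⟩
  have hmain : cmpl a n (p.length + 1) ≤ ((Ak a k).ncard - 1) * (p.length + 1) +
      (if a k ∈ Ak a (k + 1) then 1 else 0) * d :=
    (Set.ncard_le_ncard hsub ((hPfin.image _).union hTfin)).trans
      ((Set.ncard_union_le _ _).trans (add_le_add hS hT))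
  zify [hpos] at hmain
  simpa [hd] using hmain
end

section
/- For every k ≥ 0 the complexity at word length |p_k| + 1 is given exactly by C(|p_k| + 1) = (#A_k − 1)·(|p_k| + 1) + 𝟙_{A_{k+1}}(a_k)·(|p_{k−1}| + 1). -/
/-!
Write `N = |p k| + 1`. Every block `p j` with `j ≥ k`, followed by a letter of `A_{k+1}`, is a
concatenation of words `p k x` with `x ∈ A_{k+1}`. A window of length `N` in such a concatenation
is a suffix of some `p k x` followed by a prefix of `p k`, i.e. a rotation of `p k x`
(`window_eq_rotate`). Conversely `p k x p k` occurs in the language for each `x ∈ A_{k+1}`. Hence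
the words of length `N` in the language are exactly the rotations of the words `p k x`,
`x ∈ A_{k+1}` (`mem_lang_iff`), and it remains to count these rotations.

Different letters `x` give disjoint rotation classes, since the letter counts differ.

For `x ≠ a k` the word `p k x` has `N` distinct rotations (`rotate_ne_self`). It differs only in
its last letter from `p k (a k)`, which is the power `(p (k-1) (a k)) ^ n k` and thus invariant
under rotation by `M = |p (k-1)| + 1 < N`. If `p k x` were invariant under rotation by some
`0 < d < N`, then moving from the last position by `d`, then by `M`, then back by `d`, then back
by `M` would identify the last letters of both words (if `d + M = N`, moving by `M` and then `d`
already does).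

For `x = a k` the rotations of `(p (k-1) (a k)) ^ n k` correspond to those of `p (k-1) (a k)`.
By the previous case (`a k ≠ a (k-1)`), there are exactly `M` of them.
-/

open Filter

namespace ToeplitzAux

variable {A : Type*}

/-! ### Lists and their rotations -/

/-- The word `z ^ m`. -/
def wpow (m : ℕ) (z : List A) : List A := (List.replicate m z).flatten

lemma wpow_succ (m : ℕ) (z : List A) : wpow (m + 1) z = z ++ wpow m z := by
  simp [wpow, List.replicate_succ]

lemma wpow_conj (m : ℕ) (s t : List A) : wpow m (s ++ t) ++ s = s ++ wpow m (t ++ s) := by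
  induction m with
  | zero => simp [wpow]
  | succ m ih => rw [wpow_succ, wpow_succ, List.append_assoc, ih]; simp

lemma length_wpow (m : ℕ) (z : List A) : (wpow m z).length = m * z.length := by
  simp [wpow]

lemma wpow_rotate (m : ℕ) (z : List A) (i : ℕ) (hi : i ≤ z.length) :
    (wpow m z).rotate i = wpow m (z.rotate i) := by
  cases m with
  | zero => simp [wpow]
  | succ m =>
    rw [List.rotate_eq_drop_append_take hi]
    conv_lhs => rw [← List.take_append_drop i z, wpow_succ, List.append_assoc]
    have hl : (z.take i).length = i := by simp [hi]
    have hr := List.rotate_append_length_eq (z.take i)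
      (z.drop i ++ wpow m (z.take i ++ z.drop i))
    rw [hl] at hr
    rw [hr, List.append_assoc, wpow_conj, wpow_succ]
    simp

lemma wpow_inj {m : ℕ} (hm : 1 ≤ m) {y z : List A} (hl : y.length = z.length)
    (h : wpow m y = wpow m z) : y = z := by
  obtain ⟨m, rfl⟩ : ∃ r, m = r + 1 := ⟨m - 1, by omega⟩
  rw [wpow_succ, wpow_succ] at h
  exact (List.append_inj h hl).1

lemma intercalate_replicate (m : ℕ) (c : A) (p : List A) :
    List.intercalate [c] (List.replicate (m + 1) p) ++ [c] = wpow (m + 1) (p ++ [c]) := by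
  induction m with
  | zero => simp [wpow, List.intercalate]
  | succ m ih =>
    rw [wpow_succ, ← ih]
    simp [List.replicate_succ, List.intercalate]

/-- A word with no nontrivial rotation symmetry has pairwise distinct rotations. -/
lemma rotate_injOn {w : List A} (h : ∀ d, 0 < d → d < w.length → w.rotate d ≠ w) :
    Set.InjOn (fun i => w.rotate i) (Finset.range w.length) := by
  have key : ∀ i j, i < j → j < w.length → w.rotate i ≠ w.rotate j := by
    intro i j hij hj he
    refine h (j - i) (by omega) (by omega) ?_
    have h2 : w.rotate j = (w.rotate (j - i)).rotate i := by
      rw [List.rotate_rotate]; congr 1; omega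
    rw [h2] at he
    exact (List.rotate_injective i he).symm
  intro i hi j hj he
  simp only [Finset.coe_range, Set.mem_Iio] at hi hj
  rcases lt_trichotomy i j with h1 | h1 | h1
  · exact absurd he (key i j h1 hj)
  · exact h1
  · exact absurd he.symm (key j i h1 hi)

/-- If `p c` is invariant under rotation by `M`, with `0 < M ≤ |p|`, then `p x` with `x ≠ c` has
no nontrivial rotation symmetry. -/
lemma rotate_ne_self_of_period {p : List A} {c x : A} (hx : x ≠ c) {M : ℕ} (hM : 0 < M)
    (hMp : M ≤ p.length) (hper : (p ++ [c]).rotate M = p ++ [c]) (d : ℕ) (hd : 0 < d)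
    (hdp : d ≤ p.length) : (p ++ [x]).rotate d ≠ p ++ [x] := by
  intro hrot
  have hN : 0 < p.length + 1 := by omega
  -- `f` and `g` are the periodic extensions of `p x` and `p c`.
  let f : ℕ → A := fun t => (p ++ [x])[t % (p.length + 1)]'(by simpa using Nat.mod_lt t hN)
  let g : ℕ → A := fun t => (p ++ [c])[t % (p.length + 1)]'(by simpa using Nat.mod_lt t hN)
  have fd : ∀ t, f (t + d) = f t := by
    intro t
    have h1 : t % (p.length + 1) < ((p ++ [x]).rotate d).length := by
      simpa using Nat.mod_lt t hN
    have h2 := List.getElem_rotate (p ++ [x]) d (t % (p.length + 1)) h1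
    simp only [hrot, List.length_append, List.length_singleton, Nat.mod_add_mod] at h2
    exact h2.symm
  have gM : ∀ t, g (t + M) = g t := by
    intro t
    have h1 : t % (p.length + 1) < ((p ++ [c]).rotate M).length := by
      simpa using Nat.mod_lt t hN
    have h2 := List.getElem_rotate (p ++ [c]) M (t % (p.length + 1)) h1
    simp only [hper, List.length_append, List.length_singleton, Nat.mod_add_mod] at h2
    exact h2.symm
  have fg : ∀ t, t % (p.length + 1) ≠ p.length → f t = g t := by
    intro t ht
    have h1 : t % (p.length + 1) < p.length := by
      have := Nat.mod_lt t hN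
      omega
    simp only [f, g]
    rw [List.getElem_append_left h1, List.getElem_append_left h1]
  have f0 : f p.length = x := by simp [f]
  have g0 : g p.length = c := by simp [g]
  have hmod : ∀ e, 0 < e → e ≤ p.length → (p.length + e) % (p.length + 1) ≠ p.length := by
    intro e h1 h2
    have : p.length + e = (e - 1) + (p.length + 1) := by omega
    rw [this, Nat.add_mod_right, Nat.mod_eq_of_lt (by omega)]
    omega
  have e1 : f (p.length + M) = c := by rw [fg _ (hmod M hM hMp), gM, g0]
  have e2 : g (p.length + d) = x := by rw [← fg _ (hmod d hd hdp), fd, f0]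
  apply hx
  by_cases hs : (p.length + M + d) % (p.length + 1) = p.length
  · -- Here `d + M ≡ 0`, so one more step by `d` from position `M` returns to the last position.
    have h3 : f (p.length + M + d) = f p.length := by
      simp only [f, hs]
      simp
    rw [fd, e1, f0] at h3
    exact h3.symm
  · have h3 := fg _ hs
    rw [fd, e1, show p.length + M + d = p.length + d + M by ring, gM, e2] at h3
    exact h3.symm

/-- A window of length `|p| + 1` in a concatenation of words `p x` is a rotation of one of them. -/
lemma window_eq_rotate (p : List A) (l : List A) (s u t : List A)
    (h : (l.map (fun x => p ++ [x])).flatten = s ++ u ++ t) (hu : u.length = p.length + 1) :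
    ∃ x ∈ l, ∃ i < p.length + 1, u = (p ++ [x]).rotate i := by
  induction l generalizing s with
  | nil =>
    have := congrArg List.length h
    simp at this
    omega
  | cons x l ih =>
    simp only [List.map_cons, List.flatten_cons] at h
    by_cases hs : p.length + 1 ≤ s.length
    · rw [List.append_assoc s] at h
      obtain ⟨c, hc, hc'⟩ | ⟨c, hc, hc'⟩ := List.append_eq_append_iff.1 h
      · obtain ⟨y, hy, r⟩ := ih c (by rw [hc', List.append_assoc])
        exact ⟨y, List.mem_cons_of_mem _ hy, r⟩
      · have hlen := congrArg List.length hc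
        simp only [List.length_append, List.length_singleton] at hlen
        have : c = [] := List.eq_nil_of_length_eq_zero (by omega)
        subst this
        obtain ⟨y, hy, r⟩ := ih [] (by simpa using hc'.symm)
        exact ⟨y, List.mem_cons_of_mem _ hy, r⟩
    · push Not at hs
      refine ⟨x, List.mem_cons_self, s.length, hs, ?_⟩
      rw [List.rotate_eq_drop_append_take (by simp; omega)]
      have hu' : u = (((p ++ [x]) ++ (l.map (fun x => p ++ [x])).flatten).drop s.length).take
          (p.length + 1) := by
        rw [h, List.append_assoc, List.drop_left, ← hu, List.take_left]
      rw [List.drop_append_of_le_length (by simp; omega), List.take_append,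
        List.take_of_length_le (by simp)] at hu'
      have e : p.length + 1 - ((p ++ [x]).drop s.length).length = s.length := by
        simp; omega
      rw [e] at hu'
      rw [hu']
      congr 1
      cases l with
      | nil =>
        -- With no further block, the window can only fit when `s` is empty.
        have := congrArg List.length h
        simp at this
        have : s.length = 0 := by omega
        simp [this]
      | cons y l =>
        simp only [List.map_cons, List.flatten_cons, List.append_assoc]
        rw [List.take_append_of_le_length (by omega), List.take_append_of_le_length (by omega)]

/-! ### The language at length `|p k| + 1` -/

variable {a : ℕ → A} {n : ℕ → ℕ}

/-- The block `p (k - 1)`, with `p (-1)` the empty word. -/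
def prevBlock (a : ℕ → A) (n : ℕ → ℕ) : ℕ → List A
  | 0 => []
  | k + 1 => ToeplitzBlock a n k

lemma length_prevBlock (k : ℕ) : (prevBlock a n k).length = lenPrev a n k := by
  cases k <;> rfl

lemma block_append (hn : ∀ k, 2 ≤ n k) (k : ℕ) :
    ToeplitzBlock a n k ++ [a k] = wpow (n k) (prevBlock a n k ++ [a k]) := by
  have h := hn k
  cases k with
  | zero =>
    obtain ⟨m, hm⟩ : ∃ m, n 0 = m + 1 := ⟨n 0 - 1, by omega⟩
    simp [ToeplitzBlock, prevBlock, wpow, hm, ← List.replicate_succ']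
  | succ k =>
    obtain ⟨m, hm⟩ : ∃ m, n (k + 1) = m + 1 := ⟨n (k + 1) - 1, by omega⟩
    simp only [ToeplitzBlock, prevBlock, hm]
    exact intercalate_replicate m _ _

lemma length_block (hn : ∀ k, 2 ≤ n k) (k : ℕ) :
    (ToeplitzBlock a n k).length + 1 = n k * (lenPrev a n k + 1) := by
  have := congrArg List.length (block_append (a := a) hn k)
  simpa [length_wpow, length_prevBlock] using this

/-- `p (k+1) = (p k a_{k+1}) ^ (n_{k+1} - 1) p k`. -/
lemma block_succ (hn : ∀ k, 2 ≤ n k) (k : ℕ) :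
    ToeplitzBlock a n (k + 1) =
      wpow (n (k + 1) - 1) (ToeplitzBlock a n k ++ [a (k + 1)]) ++ ToeplitzBlock a n k := by
  have h := block_append (a := a) hn (k + 1)
  obtain ⟨m, hm⟩ : ∃ m, n (k + 1) = m + 1 := ⟨n (k + 1) - 1, by have := hn (k + 1); omega⟩
  apply List.append_cancel_right (bs := [a (k + 1)])
  rw [h, hm, Nat.add_sub_cancel, wpow, List.replicate_succ']
  simp [wpow, prevBlock]

lemma block_length_mono (hn : ∀ k, 2 ≤ n k) {j k : ℕ} (h : j ≤ k) :
    (ToeplitzBlock a n j).length ≤ (ToeplitzBlock a n k).length := by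
  induction k, h using Nat.le_induction with
  | base => rfl
  | succ k _ ih => rw [block_succ hn k, List.length_append]; omega

lemma block_prefix_suffix (hn : ∀ k, 2 ≤ n k) {k j : ℕ} (h : k ≤ j) :
    ToeplitzBlock a n k <+: ToeplitzBlock a n j ∧
      ToeplitzBlock a n k <:+ ToeplitzBlock a n j := by
  induction j, h using Nat.le_induction with
  | base => exact ⟨List.prefix_rfl, List.suffix_rfl⟩
  | succ j _ ih =>
    rw [block_succ hn j]
    constructor
    · obtain ⟨m, hm⟩ : ∃ m, n (j + 1) - 1 = m + 1 :=
        ⟨n (j + 1) - 2, by have := hn (j + 1); omega⟩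
      rw [hm, wpow_succ, List.append_assoc, List.append_assoc]
      exact ih.1.trans (List.prefix_append _ _)
    · exact ih.2.trans (List.suffix_append _ _)

lemma block_decomp (hn : ∀ k, 2 ≤ n k) {k j : ℕ} (h : k ≤ j) :
    ∀ x ∈ Ak a (k + 1), ∃ l : List A, (∀ y ∈ l, y ∈ Ak a (k + 1)) ∧
      ToeplitzBlock a n j ++ [x] = (l.map (fun y => ToeplitzBlock a n k ++ [y])).flatten := by
  induction j, h using Nat.le_induction with
  | base => exact fun x hx => ⟨[x], by simpa using hx, by simp⟩
  | succ j hj ih =>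
    intro x hx
    obtain ⟨l, hl, hl'⟩ := ih x hx
    obtain ⟨l₁, hl₁, hl₁'⟩ := ih (a (j + 1)) ⟨j + 1, by omega, rfl⟩
    refine ⟨wpow (n (j + 1) - 1) l₁ ++ l, ?_, ?_⟩
    · intro y hy
      rcases List.mem_append.1 hy with hy | hy
      · simp only [wpow, List.mem_flatten, List.mem_replicate] at hy
        obtain ⟨_, ⟨_, rfl⟩, hy₁⟩ := hy
        exact hl₁ y hy₁
      · exact hl y hy
    · rw [block_succ hn j, List.append_assoc, hl', hl₁', List.map_append, List.flatten_append]
      congr 1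
      generalize n (j + 1) - 1 = m
      induction m with
      | zero => simp [wpow]
      | succ m ihm => rw [wpow_succ, wpow_succ, ihm]; simp

lemma mem_lang_iff (hn : ∀ k, 2 ≤ n k) (k : ℕ) (u : List A) :
    (u ∈ ToeplitzLang a n ∧ u.length = (ToeplitzBlock a n k).length + 1) ↔
      ∃ x ∈ Ak a (k + 1), ∃ i < (ToeplitzBlock a n k).length + 1,
        u = (ToeplitzBlock a n k ++ [x]).rotate i := by
  constructor
  · rintro ⟨⟨j, s, t, h⟩, hu⟩
    have hj : k ≤ j := by
      by_contra hj
      have h1 := block_length_mono (a := a) hn (show j ≤ k by omega)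
      have h2 := congrArg List.length h
      simp at h2
      omega
    obtain ⟨l, hl, hl'⟩ := block_decomp (a := a) hn hj (a (k + 1)) ⟨k + 1, le_rfl, rfl⟩
    obtain ⟨x, hx, r⟩ := window_eq_rotate (ToeplitzBlock a n k) l s u (t ++ [a (k + 1)])
      (by rw [← hl', ← h]; simp) hu
    exact ⟨x, hl x hx, r⟩
  · rintro ⟨x, ⟨j, hj, rfl⟩, i, hi, rfl⟩
    refine ⟨⟨j, ?_⟩, by simp⟩
    obtain ⟨j, rfl⟩ : ∃ i, j = i + 1 := ⟨j - 1, by omega⟩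
    obtain ⟨⟨q, hq⟩, ⟨r, hr⟩⟩ := block_prefix_suffix (a := a) hn (show k ≤ j by omega)
    obtain ⟨m, hm⟩ : ∃ m, n (j + 1) - 1 = m + 1 :=
      ⟨n (j + 1) - 2, by have := hn (j + 1); omega⟩
    have h1 : ToeplitzBlock a n k ++ [a (j + 1)] ++ ToeplitzBlock a n k <:+:
        ToeplitzBlock a n j ++ [a (j + 1)] ++ ToeplitzBlock a n j := by
      refine ⟨r, q, ?_⟩
      calc _ = (r ++ ToeplitzBlock a n k) ++ [a (j + 1)] ++ (ToeplitzBlock a n k ++ q) := by simp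
        _ = _ := by rw [hq, hr]
    have h2 : ToeplitzBlock a n j ++ [a (j + 1)] ++ ToeplitzBlock a n j <:+:
        ToeplitzBlock a n (j + 1) := by
      have h3 : ToeplitzBlock a n j <+:
          wpow m (ToeplitzBlock a n j ++ [a (j + 1)]) ++ ToeplitzBlock a n j := by
        cases m with
        | zero => simp [wpow]
        | succ m => rw [wpow_succ]; simp
      rw [block_succ hn j, hm, wpow_succ, List.append_assoc _ (wpow _ _)]
      exact ((List.prefix_append_right_inj _).2 h3).isInfix
    refine List.IsInfix.trans ?_ (h1.trans h2)
    rw [List.rotate_eq_drop_append_take (by simp; omega),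
      List.take_append_of_le_length (by omega)]
    refine ⟨(ToeplitzBlock a n k ++ [a (j + 1)]).take i, (ToeplitzBlock a n k).drop i, ?_⟩
    rw [← List.append_assoc, List.take_append_drop, List.append_assoc, List.take_append_drop]

/-! ### Counting rotations -/

lemma rotate_ne_self (hn : ∀ k, 2 ≤ n k) (k : ℕ) {x : A} (hx : x ≠ a k) (d : ℕ) (hd : 0 < d)
    (hdp : d < (ToeplitzBlock a n k ++ [x]).length) :
    (ToeplitzBlock a n k ++ [x]).rotate d ≠ ToeplitzBlock a n k ++ [x] := by
  have hlen := length_block (a := a) hn k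
  refine rotate_ne_self_of_period hx (M := lenPrev a n k + 1) (by omega) ?_ ?_ d hd
    (by simp at hdp; omega)
  · have := Nat.mul_le_mul_right (lenPrev a n k + 1) (hn k)
    omega
  · have hz : (prevBlock a n k ++ [a k]).length = lenPrev a n k + 1 := by
      simp [length_prevBlock]
    rw [block_append hn k, ← hz, wpow_rotate _ _ _ le_rfl, List.rotate_length]

lemma prev_rotate_ne_self (hn : ∀ k, 2 ≤ n k) (ha : ∀ k, a k ≠ a (k + 1)) (k : ℕ) (d : ℕ)
    (hd : 0 < d) (hdp : d < (prevBlock a n k ++ [a k]).length) :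
    (prevBlock a n k ++ [a k]).rotate d ≠ prevBlock a n k ++ [a k] := by
  cases k with
  | zero => simp [prevBlock] at hdp; omega
  | succ k => exact rotate_ne_self hn k (ha k).symm d hd hdp

open Classical in
/-- The finite set of all rotations of `w`. -/
noncomputable def rots (w : List A) : Finset (List A) :=
  (Finset.range w.length).image (fun i => w.rotate i)

lemma card_rots {w : List A} (h : ∀ d, 0 < d → d < w.length → w.rotate d ≠ w) :
    (rots w).card = w.length := by
  classical
  rw [rots, Finset.card_image_of_injOn (rotate_injOn h), Finset.card_range]

lemma card_rots_wpow {m : ℕ} (hm : 1 ≤ m) {z : List A} :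
    (rots (wpow m z)).card = (rots z).card := by
  classical
  have : rots (wpow m z) = (rots z).image (wpow m) := by
    ext u
    simp only [rots, Finset.mem_image, Finset.mem_range, length_wpow]
    constructor
    · rintro ⟨i, hi, rfl⟩
      have hz : 0 < z.length := Nat.pos_of_ne_zero (by rintro h; simp [h] at hi)
      refine ⟨_, ⟨i % z.length, Nat.mod_lt _ hz, rfl⟩, ?_⟩
      rw [← wpow_rotate _ _ _ (Nat.mod_lt _ hz).le]
      -- `z ^ m` is invariant under rotation by multiples of `|z|`.
      have hq : ∀ q, (wpow m z).rotate (z.length * q) = wpow m z := by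
        intro q
        induction q with
        | zero => simp
        | succ q ih =>
          rw [Nat.mul_succ, ← List.rotate_rotate, ih, wpow_rotate _ _ _ le_rfl,
            List.rotate_length]
      conv_rhs => rw [← Nat.div_add_mod i z.length, ← List.rotate_rotate, hq]
    · rintro ⟨_, ⟨i, hi, rfl⟩, rfl⟩
      exact ⟨i, hi.trans_le (Nat.le_mul_of_pos_left _ hm), wpow_rotate _ _ _ hi.le⟩
  rw [this, Finset.card_image_of_injOn]
  intro y hy z₂ hz₂ he
  simp only [rots, Finset.coe_image, Set.mem_image] at hy hz₂
  obtain ⟨i, _, rfl⟩ := hy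
  obtain ⟨i₂, _, rfl⟩ := hz₂
  exact wpow_inj hm (by simp) he

lemma rots_disjoint (p : List A) {x y : A} (hxy : x ≠ y) :
    Disjoint (rots (p ++ [x])) (rots (p ++ [y])) := by
  classical
  rw [Finset.disjoint_left]
  intro u hu hv
  simp only [rots, Finset.mem_image] at hu hv
  obtain ⟨i, _, rfl⟩ := hu
  obtain ⟨j, _, hj⟩ := hv
  have h1 : (p ++ [y]).Perm (p ++ [x]) :=
    ((List.rotate_perm _ j).symm.trans (by rw [hj])).trans (List.rotate_perm _ i)
  have h2 := (List.perm_append_left_iff p).1 h1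
  simp at h2
  exact hxy h2.symm

lemma card_rots_block (hn : ∀ k, 2 ≤ n k) (k : ℕ) {x : A} (hx : x ≠ a k) :
    (rots (ToeplitzBlock a n k ++ [x])).card = (ToeplitzBlock a n k).length + 1 := by
  rw [card_rots (fun d hd hdp => rotate_ne_self hn k hx d hd hdp)]
  simp

lemma card_rots_block_self (hn : ∀ k, 2 ≤ n k) (ha : ∀ k, a k ≠ a (k + 1)) (k : ℕ) :
    (rots (ToeplitzBlock a n k ++ [a k])).card = lenPrev a n k + 1 := by
  rw [block_append hn k, card_rots_wpow (by have := hn k; omega),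
    card_rots (prev_rotate_ne_self hn ha k)]
  simp [length_prevBlock]

lemma Ak_eq_insert (k : ℕ) : Ak a k = insert (a k) (Ak a (k + 1)) := by
  ext x
  simp only [Ak, Set.mem_ofPred_eq, Set.mem_insert_iff]
  constructor
  · rintro ⟨j, hj, rfl⟩
    rcases hj.eq_or_lt with rfl | hj
    · exact Or.inl rfl
    · exact Or.inr ⟨j, hj, rfl⟩
  · rintro (rfl | ⟨j, hj, rfl⟩)
    · exact ⟨k, le_rfl, rfl⟩
    · exact ⟨j, by omega, rfl⟩

open Classical in
lemma cmpl_eq_sum [Fintype A] (hn : ∀ k, 2 ≤ n k) (k : ℕ) :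
    cmpl a n ((ToeplitzBlock a n k).length + 1) =
      ∑ x ∈ (Ak a (k + 1)).toFinset, (rots (ToeplitzBlock a n k ++ [x])).card := by
  rw [← Finset.card_biUnion (fun x _ y _ hxy => rots_disjoint _ hxy), cmpl,
    ← Set.ncard_coe_finset]
  congr 1
  ext u
  rw [Set.mem_ofPred_eq, mem_lang_iff hn k u]
  simp [rots, eq_comm]

end ToeplitzAux

open ToeplitzAux in
/- STATEMENT 6: the exact value of the complexity at word length `|p k| + 1`. -/
open Classical in
theorem stmt6 {A : Type*} [Fintype A] [Nonempty A]
    (a : ℕ → A) (n : ℕ → ℕ) (hn : ∀ k, 2 ≤ n k) (ha : ∀ k, a k ≠ a (k + 1))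
    (hAev : 2 ≤ (Aev a).ncard) (k : ℕ) :
    (cmpl a n ((ToeplitzBlock a n k).length + 1) : ℤ) =
      (((Ak a k).ncard : ℤ) - 1) * (((ToeplitzBlock a n k).length : ℤ) + 1) +
        (if a k ∈ Ak a (k + 1) then 1 else 0) * ((lenPrev a n k : ℤ) + 1) := by
  have hsum : ∀ s : Finset A, a k ∉ s →
      ∑ x ∈ s, (rots (ToeplitzBlock a n k ++ [x])).card =
        s.card * ((ToeplitzBlock a n k).length + 1) := fun s hs => by
    have hc : ∀ x ∈ s, (rots (ToeplitzBlock a n k ++ [x])).card =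
        (ToeplitzBlock a n k).length + 1 :=
      fun x hx => card_rots_block hn k (fun h => hs (h ▸ hx))
    rw [Finset.sum_congr rfl hc, Finset.sum_const, smul_eq_mul]
  rw [cmpl_eq_sum hn k, Ak_eq_insert k]
  by_cases h : a k ∈ Ak a (k + 1)
  · have h' : a k ∈ (Ak a (k + 1)).toFinset := by simpa using h
    rw [Set.insert_eq_of_mem h, ← Finset.add_sum_erase _ _ h', hsum _ (Finset.notMem_erase _ _),
      card_rots_block_self hn ha k, Set.ncard_eq_toFinset_card', if_pos h,
      ← Finset.card_erase_add_one h']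
    push_cast
    ring
  · rw [hsum _ (by simpa using h), Set.ncard_insert_of_notMem h, if_neg h,
      Set.ncard_eq_toFinset_card']
    push_cast
    ring
end
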